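/- arXiv:2508.05349 — 4 statements merged into one kernel-verified Lean document; each statement's English description precedes it below -/
import Mathlib

section
/- For every real r > 1 and every integer n ≥ 2, the function h ↦ arccos( sin(arctan(h/n)) / r ) - arccos( sin(arctan(h/n)) ) is strictly increasing on ℝ. -/
open Real

/-!
With `x = sin (arctan (h / n))`, which increases with `h`, the function is
`x ↦ arccos (c * x) - arccos x` for `c = 1 / r`. Its derivative
`1 / √(1 - x ^ 2) - c / √(1 - (c * x) ^ 2)` is positive: since `|c| ≤ 1`, the second square root
is at least the first, and `c < 1`.
-/

theorem sqrt_one_sub_sq_le_sqrt_one_sub_mul_sq {c : ℝ} (hc : |c| ≤ 1) (x : ℝ) :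
    √(1 - x ^ 2) ≤ √(1 - (c * x) ^ 2) := by
  gcongr √(1 - ?_)
  rw [mul_pow]
  exact mul_le_of_le_one_left (sq_nonneg x) ((sq_le_one_iff_abs_le_one c).2 hc)

theorem div_sqrt_one_sub_mul_sq_lt {c x : ℝ} (hc : c ∈ Set.Ico (-1) 1) (hx : |x| < 1) :
    c / √(1 - (c * x) ^ 2) < 1 / √(1 - x ^ 2) := by
  have sqrt_pos : 0 < √(1 - x ^ 2) :=
    Real.sqrt_pos.2 (sub_pos.2 ((sq_lt_one_iff_abs_lt_one x).2 hx))
  have sqrt_le : √(1 - x ^ 2) ≤ √(1 - (c * x) ^ 2) :=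
    sqrt_one_sub_sq_le_sqrt_one_sub_mul_sq (abs_le.2 ⟨hc.1, hc.2.le⟩) x
  calc
    c / √(1 - (c * x) ^ 2) < 1 / √(1 - (c * x) ^ 2) :=
      div_lt_div_of_pos_right hc.2 (sqrt_pos.trans_le sqrt_le)
    _ ≤ 1 / √(1 - x ^ 2) := one_div_le_one_div_of_le sqrt_pos sqrt_le

theorem hasDerivAt_arccos_mul_sub_arccos {c x : ℝ} (hx : |x| < 1) (hcx : |c * x| < 1) :
    HasDerivAt (fun y => arccos (c * y) - arccos y)
      (1 / √(1 - x ^ 2) - c / √(1 - (c * x) ^ 2)) x := by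
  have hasDerivAt_arccos_of_abs_lt_one {y : ℝ} (hy : |y| < 1) :
      HasDerivAt arccos (-(1 / √(1 - y ^ 2))) y :=
    hasDerivAt_arccos (abs_lt.1 hy).1.ne' (abs_lt.1 hy).2.ne
  have hasDerivAt_arccos_mul :
      HasDerivAt (fun y => arccos (c * y)) (-(1 / √(1 - (c * x) ^ 2)) * c) x :=
    (hasDerivAt_arccos_of_abs_lt_one hcx).comp x (hasDerivAt_const_mul c)
  exact (hasDerivAt_arccos_mul.fun_sub (hasDerivAt_arccos_of_abs_lt_one hx)).congr_deriv (by ring)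

theorem strictMonoOn_arccos_mul_sub_arccos {c : ℝ} (hc : c ∈ Set.Ico (-1) 1) :
    StrictMonoOn (fun x => arccos (c * x) - arccos x) (Set.Icc (-1) 1) := by
  refine strictMonoOn_of_deriv_pos (convex_Icc _ _) (by fun_prop) fun x hx => ?_
  have abs_lt_one : |x| < 1 := abs_lt.2 (by rwa [interior_Icc] at hx)
  have abs_mul_lt_one : |c * x| < 1 := by
    rw [abs_mul]
    exact mul_lt_one_of_nonneg_of_lt_one_right (abs_le.2 ⟨hc.1, hc.2.le⟩) (abs_nonneg x) abs_lt_one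
  rw [(hasDerivAt_arccos_mul_sub_arccos abs_lt_one abs_mul_lt_one).deriv]
  exact sub_pos.2 (div_sqrt_one_sub_mul_sq_lt hc abs_lt_one)

theorem stmt2_general {c ν : ℝ} (hc : c ∈ Set.Ico (-1) 1) (hν : 0 < ν) :
    StrictMono fun h => arccos (c * sin (arctan (h / ν))) - arccos (sin (arctan (h / ν))) :=
  fun _ _ hab => strictMonoOn_arccos_mul_sub_arccos hc (sin_mem_Icc _) (sin_mem_Icc _)
    (sin_arctan_strictMono (div_lt_div_of_pos_right hab hν))

theorem stmt2 (r : ℝ) (hr : 1 < r) (n : ℕ) (hn : 2 ≤ n) :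
    StrictMono (fun h : ℝ =>
      Real.arccos (Real.sin (Real.arctan (h / n)) / r)
        - Real.arccos (Real.sin (Real.arctan (h / n)))) := by
  have inv_mem : r⁻¹ ∈ Set.Ico (-1) 1 :=
    ⟨by linarith [inv_pos.2 (one_pos.trans hr)], inv_lt_one_of_one_lt₀ hr⟩
  simpa only [div_eq_inv_mul _ r] using stmt2_general inv_mem (Nat.cast_pos.2 (two_pos.trans_le hn))
end

section
/- For every δ ∈ [0, π/2) one has sin( (1/4)(π/2 - δ) ) / cos(δ) > 1/4. Moreover, the function δ ↦ sin( (1/4)(π/2 - δ) ) / cos(δ) is strictly decreasing on [0, π/2) and tends to 1/4 as δ → (π/2)⁻. -/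
open Real Filter

/- With `x = π / 2 - δ` and `a = 1 / 4` the function becomes `sin (a * x) / sin x`. For every
`0 < a < 1` this quotient exceeds `a` on `(0, π)`, because `sin` is strictly concave there, and it
tends to `a` at `0`. Its derivative has the sign of
`a * cos (a * x) * sin x - sin (a * x) * cos x`, which vanishes at `0` and has the positive
derivative `(1 - a ^ 2) * (sin (a * x) * sin x)`. -/

section SinRatio

open Set Topology

variable {a x : ℝ}

lemma sin_mul_pos (ha₀ : 0 < a) (ha₁ : a ≤ 1) (hx : x ∈ Ioo 0 π) : 0 < sin (a * x) :=
  sin_pos_of_pos_of_lt_pi (mul_pos ha₀ hx.1) ((mul_le_of_le_one_left hx.1.le ha₁).trans_lt hx.2)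

lemma mul_sin_lt_sin_mul (ha₀ : 0 < a) (ha₁ : a < 1) (hx : x ∈ Ioc 0 π) :
    a * sin x < sin (a * x) := by
  simpa using strictConcaveOn_sin_Icc.2 (left_mem_Icc.2 pi_pos.le) (Ioc_subset_Icc_self hx)
    hx.1.ne (sub_pos.2 ha₁) ha₀ (sub_add_cancel 1 a)

lemma hasDerivAt_sin_mul (a x : ℝ) : HasDerivAt (fun y ↦ sin (a * y)) (a * cos (a * x)) x := by
  simpa [mul_comm] using (hasDerivAt_const_mul a).sin

lemma hasDerivAt_cos_mul (a x : ℝ) : HasDerivAt (fun y ↦ cos (a * y)) (-(a * sin (a * x))) x := by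
  simpa [mul_comm] using (hasDerivAt_const_mul a).cos

lemma hasDerivAt_mul_cos_mul_mul_sin_sub (a x : ℝ) :
    HasDerivAt (fun y ↦ a * cos (a * y) * sin y - sin (a * y) * cos y)
      ((1 - a ^ 2) * (sin (a * x) * sin x)) x := by
  refine ((((hasDerivAt_cos_mul a x).const_mul a).mul (hasDerivAt_sin x)).sub
    ((hasDerivAt_sin_mul a x).mul (hasDerivAt_cos x))).congr_deriv ?_
  ring

lemma sin_mul_mul_cos_lt (ha₀ : 0 < a) (ha₁ : a < 1) (hx : x ∈ Ioc 0 π) :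
    sin (a * x) * cos x < a * cos (a * x) * sin x := by
  have hmono : StrictMonoOn (fun y ↦ a * cos (a * y) * sin y - sin (a * y) * cos y) (Icc 0 π) := by
    refine strictMonoOn_of_deriv_pos (convex_Icc 0 π) (by fun_prop) fun y hy ↦ ?_
    rw [interior_Icc] at hy
    rw [(hasDerivAt_mul_cos_mul_mul_sin_sub a y).deriv]
    have ha : 0 < 1 - a ^ 2 := sub_pos.2 (pow_lt_one₀ ha₀.le ha₁ two_ne_zero)
    exact mul_pos ha (mul_pos (sin_mul_pos ha₀ ha₁.le hy) (sin_pos_of_mem_Ioo hy))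
  simpa using hmono (left_mem_Icc.2 pi_pos.le) (Ioc_subset_Icc_self hx) hx.1

lemma strictMonoOn_sin_mul_div_sin (ha₀ : 0 < a) (ha₁ : a < 1) :
    StrictMonoOn (fun x ↦ sin (a * x) / sin x) (Ioo 0 π) := by
  have hderiv : ∀ x ∈ Ioo 0 π, HasDerivAt (fun x ↦ sin (a * x) / sin x)
      ((a * cos (a * x) * sin x - sin (a * x) * cos x) / sin x ^ 2) x := fun x hx ↦
    (hasDerivAt_sin_mul a x).div (hasDerivAt_sin x) (sin_pos_of_mem_Ioo hx).ne'
  refine strictMonoOn_of_deriv_pos (convex_Ioo 0 π) (HasDerivAt.continuousOn hderiv) fun x hx ↦ ?_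
  rw [interior_Ioo] at hx
  rw [(hderiv x hx).deriv]
  exact div_pos (sub_pos.2 (sin_mul_mul_cos_lt ha₀ ha₁ (Ioo_subset_Ioc_self hx)))
    (pow_pos (sin_pos_of_mem_Ioo hx) 2)

lemma tendsto_sin_mul_div_sin (a : ℝ) :
    Tendsto (fun x ↦ sin (a * x) / sin x) (𝓝[≠] 0) (𝓝 a) := by
  have hnum : Tendsto (fun x ↦ sin (a * x) / x) (𝓝[≠] 0) (𝓝 a) := by
    simpa [slope_fun_def_field] using (hasDerivAt_sin_mul a 0).tendsto_slope
  have hden : Tendsto (fun x ↦ sin x / x) (𝓝[≠] 0) (𝓝 1) := by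
    simpa [slope_fun_def_field] using (hasDerivAt_sin 0).tendsto_slope
  rw [← div_one a]
  refine (hnum.div hden one_ne_zero).congr' ?_
  filter_upwards [self_mem_nhdsWithin] with x hx
  simpa using div_div_div_cancel_right₀ hx (sin (a * x)) (sin x)

lemma pi_div_two_sub_mem_Ioo (hx : x ∈ Ioo (-(π / 2)) (π / 2)) : π / 2 - x ∈ Ioo 0 π :=
  ⟨by linarith [hx.2], by linarith [hx.1]⟩

theorem stmt5_general (ha₀ : 0 < a) (ha₁ : a < 1) :
    (∀ δ ∈ Ioo (-(π / 2)) (π / 2), a < sin (a * (π / 2 - δ)) / cos δ) ∧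
    StrictAntiOn (fun δ ↦ sin (a * (π / 2 - δ)) / cos δ) (Ioo (-(π / 2)) (π / 2)) ∧
    Tendsto (fun δ ↦ sin (a * (π / 2 - δ)) / cos δ) (𝓝[≠] (π / 2)) (𝓝 a) := by
  simp only [← sin_pi_div_two_sub]
  refine ⟨fun δ hδ ↦ ?_, fun δ hδ ε hε hlt ↦ ?_, ?_⟩
  · have hδ' := pi_div_two_sub_mem_Ioo hδ
    exact (lt_div_iff₀ (sin_pos_of_mem_Ioo hδ')).2
      (mul_sin_lt_sin_mul ha₀ ha₁ (Ioo_subset_Ioc_self hδ'))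
  · exact strictMonoOn_sin_mul_div_sin ha₀ ha₁ (pi_div_two_sub_mem_Ioo hε)
      (pi_div_two_sub_mem_Ioo hδ) (sub_lt_sub_left hlt _)
  · have hsub : Tendsto (fun δ ↦ π / 2 - δ) (𝓝[≠] (π / 2)) (𝓝[≠] 0) := by
      rw [← sub_self (π / 2)]
      exact map_subLeft_nhdsNE.le
    exact (tendsto_sin_mul_div_sin a).comp hsub

end SinRatio

theorem stmt5 :
    (∀ δ ∈ Set.Ico (0 : ℝ) (π / 2),
      1 / 4 < Real.sin ((1 / 4) * (π / 2 - δ)) / Real.cos δ) ∧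
    StrictAntiOn (fun δ : ℝ => Real.sin ((1 / 4) * (π / 2 - δ)) / Real.cos δ)
      (Set.Ico (0 : ℝ) (π / 2)) ∧
    Tendsto (fun δ : ℝ => Real.sin ((1 / 4) * (π / 2 - δ)) / Real.cos δ)
      (nhdsWithin (π / 2) (Set.Iio (π / 2))) (nhds (1 / 4)) := by
  have hsub : Set.Ico 0 (π / 2) ⊆ Set.Ioo (-(π / 2)) (π / 2) :=
    Set.Ico_subset_Ioo_left (neg_lt_zero.2 pi_div_two_pos)
  obtain ⟨hlt, hanti, hlim⟩ := stmt5_general (a := 1 / 4) (by norm_num) (by norm_num)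
  exact ⟨fun δ hδ ↦ hlt δ (hsub hδ), hanti.mono hsub, hlim.mono_left (nhdsLT_le_nhdsNE _)⟩
end

section
/- Let A > 0 and c ∈ (0,1]. Let y : [0,∞) → ℝ be differentiable with y(t) ≥ 0 and y'(t) ≥ -A·√(1 + y(t)²) for all t ≥ 0, and suppose that ∫₀ᵗ y(s) ds ≤ c for all t ≥ 0. Then y(0)² ≤ (A² + 2A)·c. -/
open Real

/-!
Since `y' ≥ -A √(1 + y²)`, the derivative `y y' / √(1 + y²)` of `√(1 + y²)` is at least `-A y` as
long as `y ≥ 0`. Hence `√(1 + y(0)²) ≤ √(1 + y(t)²) + A ∫₀ᵗ y` up to the first time `t` at which `y`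
has fallen to a given level `ε > 0`; that time is finite because the integrals of `y` are bounded.
Letting `ε → 0` gives `√(1 + y(0)²) ≤ 1 + A c`.
-/

theorem exists_first_mem_Icc_eq {α β : Type*} [ConditionallyCompleteLinearOrder α]
    [TopologicalSpace α] [OrderTopology α] [DenselyOrdered α] [LinearOrder β] [TopologicalSpace β]
    [OrderClosedTopology β] {f : α → β} {a b : α} {m : β} (hab : a ≤ b)
    (hf : ContinuousOn f (Set.Icc a b)) (ha : m ≤ f a) (hb : f b ≤ m) :
    ∃ t ∈ Set.Icc a b, f t = m ∧ ∀ s ∈ Set.Icc a t, m ≤ f s := by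
  have hcompact : IsCompact (Set.Icc a b ∩ f ⁻¹' {m}) :=
    isCompact_Icc.of_isClosed_subset
      (hf.preimage_isClosed_of_isClosed isClosed_Icc isClosed_singleton) Set.inter_subset_left
  obtain ⟨t, ⟨ht, hft⟩, hmin⟩ := hcompact.exists_isLeast (intermediate_value_Icc' hab hf ⟨hb, ha⟩)
  refine ⟨t, ht, hft, fun s hs => ?_⟩
  by_contra! hlt
  have hsb : s ≤ b := hs.2.trans ht.2
  obtain ⟨u, hu, hfu⟩ :=
    intermediate_value_Icc' hs.1 (hf.mono (Set.Icc_subset_Icc_right hsb)) ⟨hlt.le, ha⟩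
  have htu : t ≤ u := hmin ⟨⟨hu.1, hu.2.trans hsb⟩, hfu⟩
  have hus : u = s := le_antisymm hu.2 (hs.2.trans htu)
  exact hlt.ne (hus ▸ hfu)

theorem exists_le_of_forall_integral_le {f : ℝ → ℝ} {a c ε : ℝ} (hf : ContinuousOn f (Set.Ici a))
    (hint : ∀ t ∈ Set.Ici a, ∫ s in a..t, f s ≤ c) (hε : 0 < ε) : ∃ t ∈ Set.Ici a, f t ≤ ε := by
  by_contra! hlt
  obtain ⟨t, hat, hct⟩ : ∃ t, a ≤ t ∧ c < (t - a) * ε :=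
    ⟨a + (|c| + 1) / ε, le_add_of_nonneg_right (by positivity), by
      rw [add_sub_cancel_left, div_mul_cancel₀ _ hε.ne']
      linarith [le_abs_self c]⟩
  have hfint : IntervalIntegrable f MeasureTheory.volume a t :=
    (hf.mono Set.Icc_subset_Ici_self).intervalIntegrable_of_Icc hat
  have hconst : (t - a) * ε ≤ ∫ s in a..t, f s := by
    simpa only [intervalIntegral.integral_const, smul_eq_mul] using
      intervalIntegral.integral_mono_on hat intervalIntegrable_const hfint
        fun s hs => (hlt s hs.1).le
  exact (hct.trans_le hconst).not_ge (hint t hat)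

theorem exists_abs_le_and_nonneg_of_forall_integral_le {f : ℝ → ℝ} {a c ε : ℝ}
    (hf : ContinuousOn f (Set.Ici a)) (ha : 0 ≤ f a)
    (hint : ∀ t ∈ Set.Ici a, ∫ s in a..t, f s ≤ c) (hε : 0 < ε) :
    ∃ t ∈ Set.Ici a, |f t| ≤ ε ∧ ∀ s ∈ Set.Icc a t, 0 ≤ f s := by
  rcases le_total (f a) ε with hfa | hfa
  · refine ⟨a, Set.self_mem_Ici, (abs_of_nonneg ha).trans_le hfa, fun s hs => ?_⟩
    rwa [le_antisymm hs.2 hs.1]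
  · obtain ⟨b, hab, hfb⟩ := exists_le_of_forall_integral_le hf hint hε
    obtain ⟨t, ht, hft, hle⟩ :=
      exists_first_mem_Icc_eq hab (hf.mono Set.Icc_subset_Ici_self) hfa hfb
    exact ⟨t, ht.1, by rw [hft, abs_of_pos hε], fun s hs => hε.le.trans (hle s hs)⟩

theorem hasDerivWithinAt_sqrt_one_add_sq {f : ℝ → ℝ} {f' x : ℝ} {s : Set ℝ}
    (hf : HasDerivWithinAt f f' s x) :
    HasDerivWithinAt (fun t => √(1 + f t ^ 2)) (f x * f' / √(1 + f x ^ 2)) s x := by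
  have hsq : HasDerivWithinAt (fun t => 1 + f t ^ 2) (2 * (f x * f')) s x := by
    simpa [mul_assoc] using (hf.fun_pow 2).const_add 1
  have hpos : 1 + f x ^ 2 ≠ 0 := by positivity
  simpa only [mul_div_mul_left _ _ (two_ne_zero' ℝ)] using hsq.sqrt hpos

theorem sqrt_one_add_sq_le_add_integral {y y' : ℝ → ℝ} {A a b : ℝ} (hab : a ≤ b)
    (hcont : ContinuousOn y (Set.Icc a b))
    (hderiv : ∀ t ∈ Set.Ioo a b, HasDerivWithinAt y (y' t) (Set.Ioi t) t)
    (hnn : ∀ t ∈ Set.Ioo a b, 0 ≤ y t)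
    (hineq : ∀ t ∈ Set.Ioo a b, -A * √(1 + y t ^ 2) ≤ y' t) :
    √(1 + y a ^ 2) ≤ √(1 + y b ^ 2) + A * ∫ s in a..b, y s := by
  have hslope : ∀ t ∈ Set.Ioo a b, -A * y t ≤ y t * y' t / √(1 + y t ^ 2) := fun t ht => by
    rw [le_div_iff₀ (by positivity)]
    calc -A * y t * √(1 + y t ^ 2) = y t * (-A * √(1 + y t ^ 2)) := by ring
      _ ≤ y t * y' t := mul_le_mul_of_nonneg_left (hineq t ht) (hnn t ht)
  have hintegral : ∫ s in a..b, -A * y s ≤ √(1 + y b ^ 2) - √(1 + y a ^ 2) :=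
    intervalIntegral.integral_le_sub_of_hasDeriv_right_of_le hab (by fun_prop)
      (fun t ht => hasDerivWithinAt_sqrt_one_add_sq (hderiv t ht))
      (hcont.const_mul (-A)).integrableOn_Icc hslope
  rw [intervalIntegral.integral_const_mul] at hintegral
  linarith

theorem sqrt_one_add_sq_le_of_forall_integral_le {y y' : ℝ → ℝ} {A a c : ℝ} (hA : 0 ≤ A)
    (hcont : ContinuousOn y (Set.Ici a))
    (hderiv : ∀ t ∈ Set.Ioi a, HasDerivWithinAt y (y' t) (Set.Ioi t) t)
    (ha : 0 ≤ y a)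
    (hineq : ∀ t ∈ Set.Ioi a, -A * √(1 + y t ^ 2) ≤ y' t)
    (hint : ∀ t ∈ Set.Ici a, ∫ s in a..t, y s ≤ c) :
    √(1 + y a ^ 2) ≤ 1 + A * c := by
  refine le_of_forall_pos_le_add fun ε hε => ?_
  obtain ⟨t, hat, hyt, hnn⟩ := exists_abs_le_and_nonneg_of_forall_integral_le hcont ha hint hε
  have hsqrt : √(1 + y t ^ 2) ≤ 1 + |y t| := by simpa using sqrt_one_add_norm_sq_le (y t)
  calc √(1 + y a ^ 2)
      ≤ √(1 + y t ^ 2) + A * ∫ s in a..t, y s :=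
        sqrt_one_add_sq_le_add_integral hat (hcont.mono Set.Icc_subset_Ici_self)
          (fun s hs => hderiv s hs.1) (fun s hs => hnn s (Set.Ioo_subset_Icc_self hs))
          (fun s hs => hineq s hs.1)
    _ ≤ 1 + ε + A * c := by gcongr; exacts [hsqrt.trans (by gcongr), hint t hat]
    _ = 1 + A * c + ε := by ring

theorem stmt8_general {A c : ℝ} (hA : 0 ≤ A) {y y' : ℝ → ℝ}
    (hcont : ContinuousOn y (Set.Ici 0))
    (hderiv : ∀ t ∈ Set.Ioi (0 : ℝ), HasDerivWithinAt y (y' t) (Set.Ioi t) t)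
    (h0 : 0 ≤ y 0)
    (hineq : ∀ t ∈ Set.Ioi (0 : ℝ), -A * √(1 + y t ^ 2) ≤ y' t)
    (hint : ∀ t ∈ Set.Ici (0 : ℝ), ∫ s in (0 : ℝ)..t, y s ≤ c) :
    y 0 ^ 2 ≤ (A ^ 2 * c + 2 * A) * c := by
  have hsq : 1 + y 0 ^ 2 ≤ (1 + A * c) ^ 2 :=
    (Real.sqrt_le_iff.1 (sqrt_one_add_sq_le_of_forall_integral_le hA hcont hderiv h0 hineq hint)).2
  linarith

theorem stmt8 (A c : ℝ) (hA : 0 < A) (hc : c ∈ Set.Ioc (0 : ℝ) 1) (y y' : ℝ → ℝ)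
    (hderiv : ∀ t ∈ Set.Ici (0 : ℝ), HasDerivAt y (y' t) t)
    (hnn : ∀ t ∈ Set.Ici (0 : ℝ), 0 ≤ y t)
    (hineq : ∀ t ∈ Set.Ici (0 : ℝ), y' t ≥ -A * Real.sqrt (1 + (y t) ^ 2))
    (hint : ∀ t ∈ Set.Ici (0 : ℝ), ∫ s in (0 : ℝ)..t, y s ≤ c) :
    (y 0) ^ 2 ≤ (A ^ 2 + 2 * A) * c := by
  have hsq : y 0 ^ 2 ≤ (A ^ 2 * c + 2 * A) * c :=
    stmt8_general hA.le (HasDerivAt.continuousOn hderiv)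
      (fun t ht => (hderiv t (Set.Ioi_subset_Ici_self ht)).hasDerivWithinAt)
      (hnn 0 Set.self_mem_Ici) (fun t ht => hineq t (Set.Ioi_subset_Ici_self ht)) hint
  have hc0 : 0 ≤ c := hc.1.le
  exact hsq.trans (by gcongr; exact mul_le_of_le_one_right (sq_nonneg A) hc.2)
end

section
/- Let H ∈ ℝ and set T := (H + √(4 + H²))/2. Then T > 0 and T² = 1 + H·T, and for all λ₁, λ₂ ∈ ℝ with λ₁ + λ₂ = H, 1 + λ₁T ≠ 0 and 1 + λ₂T ≠ 0, one has tan(arctan λ₁ - arctan T) · tan(arctan λ₂ - arctan T) = (λ₁ - T)(λ₂ - T) / ((1 + λ₁T)(1 + λ₂T)) = 1/T² = 4/(H + √(4+H²))². -/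
open Real

/-!
The subtraction formula for `tan` turns the product into a quotient of polynomials in `T`. As `T` is
a root of `X ^ 2 = 1 + H * X`, both numerator and denominator are multiples of `1 + l₁ * l₂`, by `1`
and by `T ^ 2`, so the quotient depends on `T` alone.
-/

section CommRing

variable {R : Type*} [CommRing R] {a b t : R}

theorem sub_mul_sub_of_sq_eq (ht : t ^ 2 = 1 + (a + b) * t) :
    (a - t) * (b - t) = 1 + a * b := by
  linear_combination ht

theorem one_add_mul_mul_one_add_mul_of_sq_eq (ht : t ^ 2 = 1 + (a + b) * t) :
    (1 + a * t) * (1 + b * t) = t ^ 2 * (1 + a * b) := by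
  linear_combination -ht

end CommRing

theorem sub_mul_sub_div_one_add_mul_of_sq_eq {K : Type*} [Field K] {a b t : K}
    (ht : t ^ 2 = 1 + (a + b) * t) (ha : 1 + a * t ≠ 0) (hb : 1 + b * t ≠ 0) :
    (a - t) * (b - t) / ((1 + a * t) * (1 + b * t)) = 1 / t ^ 2 := by
  have hden := one_add_mul_mul_one_add_mul_of_sq_eq ht
  have hab : 1 + a * b ≠ 0 := right_ne_zero_of_mul (hden ▸ mul_ne_zero ha hb)
  rw [sub_mul_sub_of_sq_eq ht, hden, div_mul_cancel_right₀ hab, one_div]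

theorem tan_arctan_sub_arctan (x y : ℝ) :
    tan (arctan x - arctan y) = (x - y) / (1 + x * y) := by
  rw [tan_sub' ⟨arctan_ne_mul_pi_div_two, arctan_ne_mul_pi_div_two⟩, tan_arctan, tan_arctan]

theorem add_sqrt_add_sq_pos {d : ℝ} (hd : 0 < d) (x : ℝ) : 0 < x + √(d + x ^ 2) := by
  have hx : -√(d + x ^ 2) < x := neg_sqrt_lt_of_sq_lt (lt_add_of_pos_left _ hd)
  exact neg_lt_iff_pos_add.mp hx

theorem sq_add_sqrt_add_sq {d x : ℝ} (h : 0 ≤ d + x ^ 2) :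
    (x + √(d + x ^ 2)) ^ 2 = d + 2 * x * (x + √(d + x ^ 2)) := by
  linear_combination sq_sqrt h

theorem stmt12 (H : ℝ) :
    0 < (H + Real.sqrt (4 + H ^ 2)) / 2 ∧
    ((H + Real.sqrt (4 + H ^ 2)) / 2) ^ 2 = 1 + H * ((H + Real.sqrt (4 + H ^ 2)) / 2) ∧
    ∀ l₁ l₂ : ℝ, l₁ + l₂ = H →
      1 + l₁ * ((H + Real.sqrt (4 + H ^ 2)) / 2) ≠ 0 →
      1 + l₂ * ((H + Real.sqrt (4 + H ^ 2)) / 2) ≠ 0 →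
      (Real.tan (Real.arctan l₁ - Real.arctan ((H + Real.sqrt (4 + H ^ 2)) / 2))
          * Real.tan (Real.arctan l₂ - Real.arctan ((H + Real.sqrt (4 + H ^ 2)) / 2))
        = (l₁ - (H + Real.sqrt (4 + H ^ 2)) / 2) * (l₂ - (H + Real.sqrt (4 + H ^ 2)) / 2)
          / ((1 + l₁ * ((H + Real.sqrt (4 + H ^ 2)) / 2))
              * (1 + l₂ * ((H + Real.sqrt (4 + H ^ 2)) / 2)))) ∧
      ((l₁ - (H + Real.sqrt (4 + H ^ 2)) / 2) * (l₂ - (H + Real.sqrt (4 + H ^ 2)) / 2)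
          / ((1 + l₁ * ((H + Real.sqrt (4 + H ^ 2)) / 2))
              * (1 + l₂ * ((H + Real.sqrt (4 + H ^ 2)) / 2)))
        = 1 / ((H + Real.sqrt (4 + H ^ 2)) / 2) ^ 2) ∧
      (1 / ((H + Real.sqrt (4 + H ^ 2)) / 2) ^ 2
        = 4 / (H + Real.sqrt (4 + H ^ 2)) ^ 2) := by
  have hsq : ((H + √(4 + H ^ 2)) / 2) ^ 2 = 1 + H * ((H + √(4 + H ^ 2)) / 2) := by
    linear_combination sq_add_sqrt_add_sq (by positivity : 0 ≤ 4 + H ^ 2) / 4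
  refine ⟨half_pos (add_sqrt_add_sq_pos four_pos H), hsq, ?_⟩
  rintro l₁ l₂ rfl h₁ h₂
  refine ⟨?_, sub_mul_sub_div_one_add_mul_of_sq_eq hsq h₁ h₂, ?_⟩
  · rw [tan_arctan_sub_arctan, tan_arctan_sub_arctan, div_mul_div_comm]
  · rw [div_pow, one_div_div]
    norm_num only
end
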